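/- D is a *-super SH domain (i.e., for every nonzero nonunit x of D, xD is expressible as a *-product of finitely many *-super homogeneous ideals) if and only if D is a *-independent ring of Krull type (*-IRKT). -/

import Mathlib

open scoped nonZeroDivisors

/-- A star operation on the nonzero fractional ideals of an integral domain `D`
with quotient field `K`: it fixes nonzero principal fractional ideals, commutes with
multiplication by nonzero principal fractional ideals, is extensive, monotone and
idempotent (on nonzero fractional ideals). -/
structure StarOperation (D K : Type*) [CommRing D] [IsDomain D] [Field K]
    [Algebra D K] [IsFractionRing D K] where
  star : FractionalIdeal D⁰ K → FractionalIdeal D⁰ K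
  star_spanSingleton : ∀ x : K, x ≠ 0 →
    star (FractionalIdeal.spanSingleton D⁰ x) = FractionalIdeal.spanSingleton D⁰ x
  star_smul : ∀ (x : K) (I : FractionalIdeal D⁰ K), x ≠ 0 → I ≠ 0 →
    star (FractionalIdeal.spanSingleton D⁰ x * I) = FractionalIdeal.spanSingleton D⁰ x * star I
  le_star : ∀ I : FractionalIdeal D⁰ K, I ≠ 0 → I ≤ star I
  star_mono : ∀ I J : FractionalIdeal D⁰ K, I ≠ 0 → J ≠ 0 → I ≤ J → star I ≤ star J
  star_idem : ∀ I : FractionalIdeal D⁰ K, I ≠ 0 → star (star I) = star I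

namespace StarOperation

variable {D K : Type*} [CommRing D] [IsDomain D] [Field K] [Algebra D K] [IsFractionRing D K]
variable (s : StarOperation D K)

/-- `*` has finite character: for every nonzero fractional ideal `I`, `I^*` is the union
of `J^*` over the nonzero finitely generated fractional subideals `J` of `I`. -/
def FiniteCharacter : Prop :=
  ∀ I : FractionalIdeal D⁰ K, I ≠ 0 → ∀ x ∈ s.star I,
    ∃ J : FractionalIdeal D⁰ K, J ≠ 0 ∧ (J : Submodule D K).FG ∧ J ≤ I ∧ x ∈ s.star J

/-- A (nonzero) integral ideal `I` of `D` is a `*`-ideal if `I^* = I`. -/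
def IsStarIdeal (I : Ideal D) : Prop :=
  I ≠ ⊥ ∧ s.star (I : FractionalIdeal D⁰ K) = (I : FractionalIdeal D⁰ K)

/-- An integral ideal `I` of `D` is a `*`-ideal of finite type if `I = J^*` for some
nonzero finitely generated ideal `J`. -/
def IsFiniteTypeStarIdeal (I : Ideal D) : Prop :=
  ∃ J : Ideal D, J ≠ ⊥ ∧ J.FG ∧
    s.star (J : FractionalIdeal D⁰ K) = (I : FractionalIdeal D⁰ K)

/-- A maximal `*`-ideal: maximal among proper integral `*`-ideals. -/
def IsMaxStarIdeal (M : Ideal D) : Prop :=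
  M ≠ ⊤ ∧ s.IsStarIdeal M ∧ ∀ J : Ideal D, J ≠ ⊤ → s.IsStarIdeal J → M ≤ J → J = M

/-- `I` is `*`-homogeneous: a proper `*`-ideal of finite type such that `(J + J')^* ≠ D`
for every pair `J`, `J'` of proper `*`-ideals of finite type containing `I`. -/
def IsHomog (I : Ideal D) : Prop :=
  I ≠ ⊤ ∧ s.IsStarIdeal I ∧ s.IsFiniteTypeStarIdeal I ∧
    ∀ J J' : Ideal D, J ≠ ⊤ → J' ≠ ⊤ → s.IsStarIdeal J → s.IsStarIdeal J' →
      s.IsFiniteTypeStarIdeal J → s.IsFiniteTypeStarIdeal J' → I ≤ J → I ≤ J' →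
      s.star ((J + J' : Ideal D) : FractionalIdeal D⁰ K) ≠ 1

/-- The set `M(I) = {x ∈ D : (xD + I)^* ≠ D}` attached to an ideal `I`. -/
def MSet (I : Ideal D) : Set D :=
  {x : D | s.star ((Ideal.span {x} + I : Ideal D) : FractionalIdeal D⁰ K) ≠ 1}

/-- `A` and `B` are `*`-comaximal if `(A + B)^* = D`. -/
def StarComaximal (A B : Ideal D) : Prop :=
  s.star ((A + B : Ideal D) : FractionalIdeal D⁰ K) = 1

/-- An integral ideal `I` is `*`-invertible if `(I · I⁻¹)^* = D`. -/
def StarInvertible (I : Ideal D) : Prop :=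
  s.star ((I : FractionalIdeal D⁰ K) * (I : FractionalIdeal D⁰ K)⁻¹) = 1

/-- `D` is a `*`-SH domain: every principal ideal generated by a nonzero nonunit is a
`*`-product of finitely many `*`-homogeneous ideals. -/
def IsSHDomain : Prop :=
  ∀ x : D, x ≠ 0 → ¬IsUnit x →
    ∃ T : Multiset (Ideal D), (∀ J ∈ T, s.IsHomog J) ∧
      s.star ((T.prod : Ideal D) : FractionalIdeal D⁰ K) =
        ((Ideal.span {x} : Ideal D) : FractionalIdeal D⁰ K)

/-- `D` has finite `*`-character: every nonzero nonunit lies in only finitely many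
maximal `*`-ideals. -/
def FiniteStarCharacter : Prop :=
  ∀ x : D, x ≠ 0 → ¬IsUnit x → {P : Ideal D | s.IsMaxStarIdeal P ∧ x ∈ P}.Finite

end StarOperation

namespace StarOperation

variable {D K : Type*} [CommRing D] [IsDomain D] [Field K] [Algebra D K] [IsFractionRing D K]

/-- A `*`-homogeneous ideal `I` is `*`-super homogeneous if every `*`-ideal of finite
type containing `I` is `*`-invertible. -/
def IsSuperHomog (s : StarOperation D K) (I : Ideal D) : Prop :=
  s.IsHomog I ∧ ∀ J : Ideal D, s.IsStarIdeal J → s.IsFiniteTypeStarIdeal J → I ≤ J →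
    s.StarInvertible J

/-- `D` is a `*`-independent ring of Krull type: localizations at maximal `*`-ideals are
valuation domains, `D` is the locally finite intersection of these localizations (inside
`K`), and no two distinct maximal `*`-ideals contain a common nonzero prime ideal. -/
def IsIRKT (s : StarOperation D K) : Prop :=
  (∀ (P : Ideal D) [P.IsPrime], s.IsMaxStarIdeal P →
    ValuationRing (Localization.AtPrime P)) ∧
  (∀ x : K, (∀ P : Ideal D, s.IsMaxStarIdeal P →
      ∃ a t : D, t ∉ P ∧ x * algebraMap D K t = algebraMap D K a) →
    ∃ d : D, algebraMap D K d = x) ∧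
  s.FiniteStarCharacter ∧
  (∀ P Q : Ideal D, s.IsMaxStarIdeal P → s.IsMaxStarIdeal Q → P ≠ Q →
    ∀ L : Ideal D, L.IsPrime → L ≠ ⊥ → ¬(L ≤ P ⊓ Q))

end StarOperation

/-!
The ideals `xD_P ∩ D`, for `P` a maximal `*`-ideal, carry the proof; finite character makes them
`*`-closed.

Let `xD` be the `*`-product of `*`-super homogeneous ideals. If `I` is one of them, then `I` and
all the ideals `(I + wD)*` are `*`-invertible, hence principal in `D_P` with a generator taken from
the given generating set. So a generator of `I D_P` is comparable with every `w` under divisibility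
in `D_P`. Elements with this property are closed under products, so `x` has it too, and `D_P` is a
valuation domain. Local finiteness and independence hold because a `*`-homogeneous ideal is
contained in only one maximal `*`-ideal.

In a `*`-independent ring of Krull type, `xD` is the `*`-product of the ideals `xD_P ∩ D` over the
finitely many `P` containing `x`. By independence `P` is the only maximal `*`-ideal containing
`xD_P ∩ D`; prime avoidance then gives a `y` with `xD_P ∩ D = (x, y)*`, and finitely generated
ideals are `*`-invertible because they are locally principal.
-/

theorem exists_fg_le_sup {R M : Type*} [Semiring R] [AddCommMonoid M] [Module R M]
    {N N₁ N₂ : Submodule R M} (hN : N.FG) (h : N ≤ N₁ ⊔ N₂) :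
    ∃ F₁ ≤ N₁, ∃ F₂ ≤ N₂, F₁.FG ∧ F₂.FG ∧ N ≤ F₁ ⊔ F₂ := by
  induction N, hN using Submodule.fg_induction with
  | singleton x =>
    obtain ⟨y, hy, z, hz, rfl⟩ := Submodule.mem_sup.1 (h (Submodule.mem_span_singleton_self x))
    refine ⟨R ∙ y, by simpa, R ∙ z, by simpa, Submodule.fg_span_singleton y,
      Submodule.fg_span_singleton z, (Submodule.span_singleton_le_iff_mem _ _).2 ?_⟩
    exact Submodule.add_mem_sup (Submodule.mem_span_singleton_self y)
      (Submodule.mem_span_singleton_self z)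
  | sup A B _ _ hA hB =>
    obtain ⟨F₁, hF₁, F₂, hF₂, hF₁fg, hF₂fg, hAF⟩ := hA (le_sup_left.trans h)
    obtain ⟨G₁, hG₁, G₂, hG₂, hG₁fg, hG₂fg, hBG⟩ := hB (le_sup_right.trans h)
    exact ⟨F₁ ⊔ G₁, sup_le hF₁ hG₁, F₂ ⊔ G₂, sup_le hF₂ hG₂, hF₁fg.sup hG₁fg, hF₂fg.sup hG₂fg,
      sup_sup_sup_comm F₁ F₂ G₁ G₂ ▸ sup_le_sup hAF hBG⟩

section LocalContraction

variable {R : Type*} [CommRing R] {P I J : Ideal R}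

/-- The contraction `I R_P ∩ R` of the extension of `I` to the localization at a prime `P`, as the
union of the ideals `(I : t)` with `t ∉ P`. It is written as a supremum so as to be an ideal
whether or not `P` is prime. -/
def localContraction (P I : Ideal R) : Ideal R :=
  ⨆ t : {t : R // t ∉ P}, I.colon {t.1}

theorem directed_colon_notMem [hP : P.IsPrime] (I : Ideal R) :
    Directed (· ≤ ·) fun t : {t : R // t ∉ P} => I.colon {t.1} := by
  rintro ⟨t, ht⟩ ⟨u, hu⟩
  refine ⟨⟨t * u, hP.mul_notMem ht hu⟩, fun d hd => ?_, fun d hd => ?_⟩ <;>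
    simp only [Submodule.mem_colon_singleton, smul_eq_mul] at hd ⊢
  · simpa only [mul_assoc] using I.mul_mem_right u hd
  · simpa only [mul_left_comm] using I.mul_mem_left t hd

theorem mem_localContraction [hP : P.IsPrime] {d : R} :
    d ∈ localContraction P I ↔ ∃ t ∉ P, t * d ∈ I := by
  have : Nonempty {t : R // t ∉ P} := ⟨1, hP.one_notMem⟩
  simp [localContraction, Submodule.mem_iSup_of_directed _ (directed_colon_notMem I), mul_comm d]

theorem mem_localContraction_span_singleton [P.IsPrime] {c d : R} :
    d ∈ localContraction P (Ideal.span {c}) ↔ ∃ t ∉ P, c ∣ t * d := by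
  simp only [mem_localContraction, Ideal.mem_span_singleton]

theorem le_localContraction [hP : P.IsPrime] : I ≤ localContraction P I := fun d hd =>
  mem_localContraction.2 ⟨1, hP.one_notMem, by rwa [one_mul]⟩

theorem localContraction_mono [P.IsPrime] (h : I ≤ J) :
    localContraction P I ≤ localContraction P J := fun d hd => by
  obtain ⟨t, ht, htd⟩ := mem_localContraction.1 hd
  exact mem_localContraction.2 ⟨t, ht, h htd⟩

theorem localContraction_le_localContraction_iff [hP : P.IsPrime] :
    localContraction P I ≤ localContraction P J ↔ I ≤ localContraction P J := by
  refine ⟨le_localContraction.trans, fun h d hd => ?_⟩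
  obtain ⟨t, ht, htd⟩ := mem_localContraction.1 hd
  obtain ⟨u, hu, hutd⟩ := mem_localContraction.1 (h htd)
  exact mem_localContraction.2 ⟨u * t, hP.mul_notMem hu ht, by rwa [mul_assoc]⟩

theorem localContraction_le_of_le [hP : P.IsPrime] (h : I ≤ P) : localContraction P I ≤ P := by
  intro d hd
  obtain ⟨t, ht, htd⟩ := mem_localContraction.1 hd
  exact (hP.mem_or_mem (h htd)).resolve_left ht

theorem localContraction_eq_top_of_not_le [P.IsPrime] (h : ¬I ≤ P) : localContraction P I = ⊤ := by
  obtain ⟨t, htI, htP⟩ := SetLike.not_le_iff_exists.1 h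
  exact (Ideal.eq_top_iff_one _).2 (mem_localContraction.2 ⟨t, htP, by rwa [mul_one]⟩)

theorem localContraction_mul_le [hP : P.IsPrime] :
    localContraction P I * localContraction P J ≤ localContraction P (I * J) := by
  refine Ideal.mul_le.2 fun a ha b hb => ?_
  obtain ⟨t, ht, hta⟩ := mem_localContraction.1 ha
  obtain ⟨u, hu, hub⟩ := mem_localContraction.1 hb
  refine mem_localContraction.2 ⟨t * u, hP.mul_notMem ht hu, ?_⟩
  rw [mul_mul_mul_comm]
  exact Ideal.mul_mem_mul hta hub

theorem prod_localContraction_le [P.IsPrime] {ι : Type*} (S : Finset ι) (A : ι → Ideal R) :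
    ∏ i ∈ S, localContraction P (A i) ≤ localContraction P (∏ i ∈ S, A i) := by
  classical
  induction S using Finset.induction_on with
  | empty => simpa only [Finset.prod_empty] using le_localContraction
  | insert i S hi ih =>
    rw [Finset.prod_insert hi, Finset.prod_insert hi]
    exact (Ideal.mul_mono_right ih).trans localContraction_mul_le

theorem exists_le_colon_of_fg [hP : P.IsPrime] (hI : I.FG) (h : I ≤ localContraction P J) :
    ∃ t ∉ P, I ≤ J.colon {t} := by
  have : Nonempty {t : R // t ∉ P} := ⟨1, hP.one_notMem⟩
  obtain ⟨_, ⟨⟨t, ht⟩, rfl⟩, hIt⟩ := (Submodule.fg_iff_compact I).1 hI _ _ (Set.range_nonempty _)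
    (directed_colon_notMem J).directedOn_range isLUB_iSup h
  exact ⟨t, ht, hIt⟩

theorem exists_isPrime_le_inf_of_localContraction_le {Q : Ideal R} [P.IsPrime] [Q.IsPrime]
    (h : localContraction P I ≤ Q) : ∃ L : Ideal R, L.IsPrime ∧ I ≤ L ∧ L ≤ P ⊓ Q := by
  have hdisj : Disjoint (I : Set R) (P.primeCompl ⊔ Q.primeCompl : Submonoid R) := by
    refine Set.disjoint_left.2 fun y hyI hy => ?_
    obtain ⟨p, hp, q, hq, rfl⟩ := Submonoid.mem_sup.1 hy
    exact hq (h (mem_localContraction.2 ⟨p, hp, hyI⟩))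
  obtain ⟨L, hL, hIL, hLdisj⟩ := Ideal.exists_le_prime_disjoint _ _ hdisj
  have hL' := fun y (hy : y ∈ L) => Set.disjoint_left.1 hLdisj hy
  exact ⟨L, hL, hIL, le_inf (fun y hy => by_contra fun hyP => hL' y hy (Submonoid.mem_sup_left hyP))
    fun y hy => by_contra fun hyQ => hL' y hy (Submonoid.mem_sup_right hyQ)⟩

/-- `c` generates `I` locally at `P`, that is, `c ∈ I` and `I R_P = c R_P`. -/
def IsLocalGenerator (P I : Ideal R) (c : R) : Prop :=
  c ∈ I ∧ I ≤ localContraction P (Ideal.span {c})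

theorem IsLocalGenerator.mul [hP : P.IsPrime] {c d : R} (hc : IsLocalGenerator P I c)
    (hd : IsLocalGenerator P J d) : IsLocalGenerator P (I * J) (c * d) := by
  refine ⟨Ideal.mul_mem_mul hc.1 hd.1, ?_⟩
  rw [← Ideal.span_singleton_mul_span_singleton]
  exact (Ideal.mul_mono hc.2 hd.2).trans localContraction_mul_le

theorem IsLocalGenerator.ne_zero [NoZeroDivisors R] [P.IsPrime] {c : R}
    (hc : IsLocalGenerator P I c) (hI : I ≠ ⊥) : c ≠ 0 := by
  rintro rfl
  obtain ⟨d, hdI, hd⟩ := Submodule.exists_mem_ne_zero_of_ne_bot hI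
  obtain ⟨t, ht, htd⟩ := mem_localContraction_span_singleton.1 (hc.2 hdI)
  obtain rfl := (mul_eq_zero_iff_right hd).1 (zero_dvd_iff.1 htd)
  exact ht P.zero_mem

/-- For every `w` in `R`, one of `c` and `w` divides the other in `R_P`. The localization `R_P` is a
valuation ring when this holds for all `c`; the elements `c` for which it holds are closed under
multiplication, so the condition can be tested on factors. -/
def IsLocallyComparable (P : Ideal R) (c : R) : Prop :=
  ∀ w : R, w ∈ localContraction P (Ideal.span {c}) ∨ c ∈ localContraction P (Ideal.span {w})

theorem IsLocallyComparable.mul [hP : P.IsPrime] {c d : R} (hc : IsLocallyComparable P c)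
    (hd : IsLocallyComparable P d) : IsLocallyComparable P (c * d) := by
  intro w
  simp only [IsLocallyComparable, mem_localContraction_span_singleton] at hc hd ⊢
  obtain ⟨t, ht, v, hv⟩ | ⟨t, ht, hwc⟩ := hc w
  · obtain ⟨u, hu, huv⟩ | ⟨u, hu, hud⟩ := hd v
    · refine .inl ⟨u * t, hP.mul_notMem hu ht, ?_⟩
      rw [mul_assoc, hv, mul_left_comm]
      exact mul_dvd_mul_left c huv
    · refine .inr ⟨u, hu, ?_⟩
      calc w ∣ t * w := dvd_mul_left w t
        _ = c * v := hv
        _ ∣ c * (u * d) := mul_dvd_mul_left c hud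
        _ = u * (c * d) := mul_left_comm c u d
  · exact .inr ⟨t, ht, by rw [← mul_assoc]; exact hwc.mul_right d⟩

theorem IsLocallyComparable.of_localContraction_eq [P.IsPrime] {c d : R}
    (hc : IsLocallyComparable P c)
    (h : localContraction P (Ideal.span {c}) = localContraction P (Ideal.span {d})) :
    IsLocallyComparable P d := by
  have hdc : d ∈ localContraction P (Ideal.span {c}) :=
    h ▸ le_localContraction (Ideal.mem_span_singleton_self d)
  refine fun w => (hc w).imp (fun hw => h ▸ hw) fun hcw => ?_
  exact localContraction_le_localContraction_iff.2 ((Ideal.span_singleton_le_iff_mem _).2 hcw) hdc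

theorem IsLocallyComparable.of_isUnit [hP : P.IsPrime] {c : R} (hc : IsUnit c) :
    IsLocallyComparable P c := fun _ =>
  .inl (mem_localContraction_span_singleton.2 ⟨1, hP.one_notMem, hc.dvd⟩)

theorem isLocallyComparable_zero : IsLocallyComparable P 0 := fun _ =>
  .inr (Ideal.zero_mem _)

theorem exists_isLocalGenerator_multiset_prod [P.IsPrime] {T : Multiset (Ideal R)}
    (hT : ∀ I ∈ T, ∃ c, IsLocalGenerator P I c ∧ IsLocallyComparable P c) :
    ∃ c, IsLocalGenerator P T.prod c ∧ IsLocallyComparable P c := by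
  induction T using Multiset.induction_on with
  | empty =>
    refine ⟨1, ?_, .of_isUnit isUnit_one⟩
    rw [Multiset.prod_zero, Ideal.one_eq_top]
    exact ⟨trivial, Ideal.span_singleton_one (α := R) ▸ le_localContraction⟩
  | cons I T ih =>
    obtain ⟨c, hcI, hc⟩ := hT I (Multiset.mem_cons_self I T)
    obtain ⟨d, hdT, hd⟩ := ih fun J hJ => hT J (Multiset.mem_cons_of_mem hJ)
    exact ⟨c * d, Multiset.prod_cons I T ▸ hcI.mul hdT, hc.mul hd⟩

theorem exists_isLocalGenerator_of_fg [hP : P.IsPrime] (h : ∀ c : R, IsLocallyComparable P c)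
    (hI : I.FG) : ∃ c, IsLocalGenerator P I c := by
  induction I, hI using Submodule.fg_induction with
  | singleton c => exact ⟨c, Ideal.mem_span_singleton_self c, le_localContraction⟩
  | sup M N _ _ hM hN =>
    obtain ⟨c, hcM, hc⟩ := hM
    obtain ⟨d, hdN, hd⟩ := hN
    obtain hdc | hcd := h c d
    · refine ⟨c, Ideal.mem_sup_left hcM, sup_le hc (hd.trans ?_)⟩
      rwa [localContraction_le_localContraction_iff, Ideal.span_singleton_le_iff_mem]
    · refine ⟨d, Ideal.mem_sup_right hdN, sup_le (hc.trans ?_) hd⟩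
      rwa [localContraction_le_localContraction_iff, Ideal.span_singleton_le_iff_mem]

theorem algebraMap_dvd_algebraMap_iff_mem_localContraction [P.IsPrime] {c d : R} :
    algebraMap R (Localization.AtPrime P) c ∣ algebraMap R (Localization.AtPrime P) d ↔
      d ∈ localContraction P (Ideal.span {c}) := by
  rw [← Ideal.mem_span_singleton, ← Set.image_singleton, ← Ideal.map_span,
    IsLocalization.algebraMap_mem_map_algebraMap_iff P.primeCompl, mem_localContraction]
  rfl

theorem exists_associated_algebraMap [P.IsPrime] (a : Localization.AtPrime P) :
    ∃ c : R, Associated a (algebraMap R (Localization.AtPrime P) c) := by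
  obtain ⟨⟨c, t⟩, hct⟩ := IsLocalization.surj P.primeCompl a
  exact ⟨c, hct ▸ associated_mul_unit_right a _ (IsLocalization.map_units _ t)⟩

theorem valuationRing_localization_iff [IsDomain R] [P.IsPrime] :
    ValuationRing (Localization.AtPrime P) ↔ ∀ c : R, IsLocallyComparable P c := by
  rw [ValuationRing.iff_dvd_total]
  simp only [IsLocallyComparable, ← algebraMap_dvd_algebraMap_iff_mem_localContraction]
  refine ⟨fun h c w => h.total _ _, fun h => ⟨fun a b => ?_⟩⟩
  obtain ⟨c, hac⟩ := exists_associated_algebraMap a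
  obtain ⟨d, hbd⟩ := exists_associated_algebraMap b
  rw [hac.dvd_iff_dvd_left, hbd.dvd_iff_dvd_right, hbd.dvd_iff_dvd_left, hac.dvd_iff_dvd_right]
  exact h c d

end LocalContraction

section FractionColon

variable {D K : Type*} [CommRing D] [Field K] [Algebra D K] {I J : Ideal D}

/-- The ideal `(J :_D x)` of those `t` in `D` with `t x ∈ J`, for `x` in a field `K` over `D`. -/
def fractionColon (J : Ideal D) (x : K) : Ideal D :=
  (IsLocalization.coeSubmodule K J).colon {x}

theorem mem_fractionColon {x : K} {t : D} :
    t ∈ fractionColon J x ↔ ∃ j ∈ J, algebraMap D K j = algebraMap D K t * x := by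
  rw [fractionColon, Submodule.mem_colon_singleton, IsLocalization.mem_coeSubmodule,
    Algebra.smul_def]

theorem fractionColon_zero : fractionColon J (0 : K) = ⊤ :=
  (Ideal.eq_top_iff_one _).2 (mem_fractionColon.2 ⟨0, J.zero_mem, by simp⟩)

theorem fractionColon_algebraMap [IsFractionRing D K] (d : D) :
    fractionColon J (algebraMap D K d) = J.colon {d} := by
  ext t
  rw [mem_fractionColon, Submodule.mem_colon_singleton, smul_eq_mul, ← map_mul]
  simp only [(IsFractionRing.injective D K).eq_iff, exists_eq_right]

theorem fractionColon_top_ne_bot [IsFractionRing D K] (x : K) :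
    fractionColon (⊤ : Ideal D) x ≠ ⊥ := by
  obtain ⟨a, b, hb, rfl⟩ := IsFractionRing.div_surjective (A := D) x
  have hb0 : algebraMap D K b ≠ 0 := (IsLocalization.map_units K (⟨b, hb⟩ : D⁰)).ne_zero
  refine (Submodule.ne_bot_iff _).2 ⟨b, mem_fractionColon.2 ⟨a, trivial, ?_⟩, ?_⟩
  · rw [mul_div_cancel₀ _ hb0]
  · rintro rfl
    exact hb0 (map_zero _)

theorem spanSingleton_mul_coeIdeal_le_iff [IsFractionRing D K] {x : K} :
    FractionalIdeal.spanSingleton D⁰ x * (I : FractionalIdeal D⁰ K) ≤ (J : FractionalIdeal D⁰ K) ↔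
      I ≤ fractionColon J x := by
  rw [FractionalIdeal.spanSingleton_mul_le_iff]
  simp only [FractionalIdeal.mem_coeIdeal, forall_exists_index, and_imp, forall_apply_eq_imp_iff₂,
    SetLike.le_def, mem_fractionColon, mul_comm x]

end FractionColon

namespace StarOperation

variable {D K : Type*} [CommRing D] [IsDomain D] [Field K] [Algebra D K] [IsFractionRing D K]
variable {s : StarOperation D K} {I J P Q : Ideal D}

section Closure

theorem star_ne_zero (s : StarOperation D K) {I : FractionalIdeal D⁰ K} (hI : I ≠ 0) :
    s.star I ≠ 0 := fun h =>
  hI (FractionalIdeal.le_zero_iff.1 (h ▸ s.le_star I hI))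

theorem star_le_star_of_le_star (s : StarOperation D K) {I J : FractionalIdeal D⁰ K} (hI : I ≠ 0)
    (hJ : J ≠ 0) (h : I ≤ s.star J) : s.star I ≤ s.star J :=
  (s.star_mono I _ hI (s.star_ne_zero hJ) h).trans_eq (s.star_idem J hJ)

theorem star_one (s : StarOperation D K) : s.star 1 = 1 := by
  simpa only [FractionalIdeal.spanSingleton_one] using s.star_spanSingleton 1 one_ne_zero

open Classical in
/-- The star operation as a closure operator `I ↦ I*` on integral ideals. The zero ideal, at which
`s.star` is unconstrained, is declared to be closed. -/
noncomputable def closure (s : StarOperation D K) : ClosureOperator (Ideal D) :=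
  ClosureOperator.mk₂
    (fun I => if I = ⊥ then ⊥ else
      (s.star (I : FractionalIdeal D⁰ K) : Submodule D K).comap (Algebra.linearMap D K))
    (fun I => by
      split_ifs with hI
      · exact hI.le
      · exact fun d hd => s.le_star _ (FractionalIdeal.coeIdeal_ne_zero.2 hI)
          (FractionalIdeal.mem_coeIdeal_of_mem D⁰ hd))
    (fun I J hIJ => by
      split_ifs at hIJ ⊢ with hI hJ hJ
      · exact le_rfl
      · exact bot_le
      · exact absurd (le_bot_iff.1 hIJ) hI
      · refine fun d hd => s.star_le_star_of_le_star (FractionalIdeal.coeIdeal_ne_zero.2 hI)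
          (FractionalIdeal.coeIdeal_ne_zero.2 hJ) (fun y hy => ?_) hd
        obtain ⟨i, hi, rfl⟩ := (FractionalIdeal.mem_coeIdeal _).1 hy
        exact hIJ hi)

theorem mem_closure (hI : I ≠ ⊥) {d : D} :
    d ∈ s.closure I ↔ algebraMap D K d ∈ s.star (I : FractionalIdeal D⁰ K) := by
  change d ∈ ite _ _ _ ↔ _
  rw [if_neg hI]
  rfl

theorem closure_ne_bot (hI : I ≠ ⊥) : s.closure I ≠ ⊥ :=
  ne_bot_of_le_ne_bot hI (s.closure.le_closure I)

theorem isClosed_bot : s.closure.IsClosed (⊥ : Ideal D) :=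
  ClosureOperator.isClosed_iff_closure_le.2 (if_pos rfl).le

theorem coeIdeal_closure (hI : I ≠ ⊥) :
    (s.closure I : FractionalIdeal D⁰ K) = s.star (I : FractionalIdeal D⁰ K) := by
  have hle : s.star (I : FractionalIdeal D⁰ K) ≤ 1 :=
    s.star_one ▸ s.star_mono _ _ (FractionalIdeal.coeIdeal_ne_zero.2 hI) one_ne_zero
      FractionalIdeal.coeIdeal_le_one
  ext x
  rw [FractionalIdeal.mem_coeIdeal]
  constructor
  · rintro ⟨d, hd, rfl⟩
    exact (mem_closure hI).1 hd
  · intro hx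
    obtain ⟨d, rfl⟩ := (FractionalIdeal.mem_one_iff D⁰).1 (hle hx)
    exact ⟨d, (mem_closure hI).2 hx, rfl⟩

theorem star_coeIdeal_eq_coeIdeal_iff (hI : I ≠ ⊥) :
    s.star (I : FractionalIdeal D⁰ K) = (J : FractionalIdeal D⁰ K) ↔ s.closure I = J := by
  rw [← coeIdeal_closure hI, FractionalIdeal.coeIdeal_inj]

theorem star_coeIdeal_eq_one_iff (hI : I ≠ ⊥) :
    s.star (I : FractionalIdeal D⁰ K) = 1 ↔ s.closure I = ⊤ := by
  rw [← star_coeIdeal_eq_coeIdeal_iff hI, FractionalIdeal.coeIdeal_top]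

theorem isStarIdeal_iff : s.IsStarIdeal I ↔ I ≠ ⊥ ∧ s.closure.IsClosed I :=
  and_congr_right fun hI => (star_coeIdeal_eq_coeIdeal_iff hI).trans s.closure.isClosed_iff.symm

theorem isStarIdeal_closure (hI : I ≠ ⊥) : s.IsStarIdeal (s.closure I) :=
  isStarIdeal_iff.2 ⟨closure_ne_bot hI, s.closure.isClosed_closure I⟩

theorem isFiniteTypeStarIdeal_iff :
    s.IsFiniteTypeStarIdeal I ↔ ∃ J : Ideal D, J ≠ ⊥ ∧ J.FG ∧ s.closure J = I :=
  exists_congr fun _ => and_congr_right fun hJ => and_congr_right fun _ =>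
    star_coeIdeal_eq_coeIdeal_iff hJ

theorem isFiniteTypeStarIdeal_closure (hI : I ≠ ⊥) (hfg : I.FG) :
    s.IsFiniteTypeStarIdeal (s.closure I) :=
  isFiniteTypeStarIdeal_iff.2 ⟨I, hI, hfg, rfl⟩

theorem IsFiniteTypeStarIdeal.isStarIdeal (hI : s.IsFiniteTypeStarIdeal I) : s.IsStarIdeal I := by
  obtain ⟨J, hJ, -, rfl⟩ := isFiniteTypeStarIdeal_iff.1 hI
  exact isStarIdeal_closure hJ

theorem IsFiniteTypeStarIdeal.closure_sup (hI : s.IsFiniteTypeStarIdeal I) (hJ : J.FG) :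
    s.IsFiniteTypeStarIdeal (s.closure (I ⊔ J)) := by
  obtain ⟨F, hF, hFfg, rfl⟩ := isFiniteTypeStarIdeal_iff.1 hI
  rw [ClosureOperator.closure_sup_closure_left]
  exact isFiniteTypeStarIdeal_closure (ne_bot_of_le_ne_bot hF le_sup_left)
    (Submodule.FG.sup hFfg hJ)

theorem isClosed_span_singleton (x : D) : s.closure.IsClosed (Ideal.span {x}) := by
  obtain rfl | hx := eq_or_ne x 0
  · simpa only [Ideal.span_zero, Set.singleton_zero] using isClosed_bot
  · have hspan : Ideal.span {x} ≠ ⊥ := by simpa using hx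
    refine s.closure.isClosed_iff.2 ((star_coeIdeal_eq_coeIdeal_iff hspan).1 ?_)
    rw [FractionalIdeal.coeIdeal_span_singleton]
    exact s.star_spanSingleton _ (by simpa using hx)

end Closure

section Colon

theorem isClosed_fractionColon (hJ : s.closure.IsClosed J) (x : K) :
    s.closure.IsClosed (fractionColon J x) := by
  obtain hC | hC := eq_or_ne (fractionColon J x) ⊥
  · exact hC ▸ isClosed_bot
  obtain rfl | hx := eq_or_ne x 0
  · rw [fractionColon_zero]
    exact s.closure.isClosed_top
  have hC0 := FractionalIdeal.coeIdeal_ne_zero (K := K).2 hC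
  have hle := spanSingleton_mul_coeIdeal_le_iff.2 (le_refl (fractionColon J x))
  have hunit := IsUnit.of_mul_eq_one _ (FractionalIdeal.spanSingleton_mul_inv (R₁ := D) K hx)
  have hmul := hunit.mul_right_eq_zero.not.2 hC0
  have hJ0 : (J : FractionalIdeal D⁰ K) ≠ 0 := ne_bot_of_le_ne_bot hmul hle
  have hJ' := (isStarIdeal_iff.2 ⟨FractionalIdeal.coeIdeal_ne_zero.1 hJ0, hJ⟩).2
  rw [ClosureOperator.isClosed_iff_closure_le, ← spanSingleton_mul_coeIdeal_le_iff,
    coeIdeal_closure hC, ← s.star_smul x _ hx hC0, ← hJ']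
  exact s.star_mono _ _ hmul hJ0 hle

theorem isClosed_colon (hJ : s.closure.IsClosed J) (d : D) : s.closure.IsClosed (J.colon {d}) :=
  fractionColon_algebraMap (K := K) (J := J) d ▸ isClosed_fractionColon hJ _

end Colon

section MaxStarIdeal

theorem IsMaxStarIdeal.isClosed (hP : s.IsMaxStarIdeal P) : s.closure.IsClosed P :=
  (isStarIdeal_iff.1 hP.2.1).2

theorem IsMaxStarIdeal.eq_of_le (hP : s.IsMaxStarIdeal P) (hI : s.closure.IsClosed I)
    (hI_top : I ≠ ⊤) (hPI : P ≤ I) : I = P :=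
  hP.2.2 I hI_top (isStarIdeal_iff.2 ⟨ne_bot_of_le_ne_bot hP.2.1.1 hPI, hI⟩) hPI

theorem IsMaxStarIdeal.isPrime (hP : s.IsMaxStarIdeal P) : P.IsPrime := by
  refine ⟨hP.1, fun {a b} hab => or_iff_not_imp_right.2 fun hb => ?_⟩
  have hcolon : P.colon {b} = P := hP.eq_of_le (isClosed_colon hP.isClosed b)
    (fun h => hb (by simpa using (Ideal.eq_top_iff_one _).1 h)) Ideal.le_colon
  exact hcolon ▸ Submodule.mem_colon_singleton.2 hab

end MaxStarIdeal

section FiniteCharacter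

theorem exists_fg_le_mem_closure (hs : s.FiniteCharacter) {d : D} (hd : d ∈ s.closure I) :
    ∃ F ≤ I, F.FG ∧ d ∈ s.closure F := by
  obtain rfl | hI := eq_or_ne I ⊥
  · exact ⟨⊥, le_rfl, Submodule.fg_bot, hd⟩
  obtain ⟨F, hF, hFfg, hFI, hdF⟩ := hs I (FractionalIdeal.coeIdeal_ne_zero.2 hI) _
    ((mem_closure hI).1 hd)
  obtain ⟨F, rfl⟩ := FractionalIdeal.le_one_iff_exists_coeIdeal.1
    (hFI.trans FractionalIdeal.coeIdeal_le_one)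
  exact ⟨F, (FractionalIdeal.coeIdeal_le_coeIdeal K).1 hFI,
    (FractionalIdeal.coeIdeal_fg D⁰ (IsFractionRing.injective D K) F).1 hFfg,
    (mem_closure (FractionalIdeal.coeIdeal_ne_zero.1 hF)).2 hdF⟩

theorem isClosed_sSup_of_directedOn (hs : s.FiniteCharacter) {c : Set (Ideal D)}
    (hne : c.Nonempty) (hdir : DirectedOn (· ≤ ·) c) (hc : ∀ J ∈ c, s.closure.IsClosed J) :
    s.closure.IsClosed (sSup c) := by
  refine ClosureOperator.isClosed_iff_closure_le.2 fun d hd => ?_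
  obtain ⟨F, hFc, hF, hdF⟩ := exists_fg_le_mem_closure hs hd
  obtain ⟨J, hJ, hFJ⟩ := (Submodule.fg_iff_compact F).1 hF c _ hne hdir (isLUB_sSup c) hFc
  exact le_sSup hJ (ClosureOperator.closure_min hFJ (hc J hJ) hdF)

theorem IsStarIdeal.exists_isMaxStarIdeal_ge (hs : s.FiniteCharacter) (hI : s.IsStarIdeal I)
    (hI_top : I ≠ ⊤) : ∃ P, s.IsMaxStarIdeal P ∧ I ≤ P := by
  obtain ⟨P, hIP, hP⟩ := zorn_le_nonempty₀ {J | J ≠ ⊤ ∧ s.closure.IsClosed J}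
    (fun c hc hchain J hJ => by
      refine ⟨sSup c, ⟨fun h => ?_, isClosed_sSup_of_directedOn hs ⟨J, hJ⟩ hchain.directedOn
        fun J hJ => (hc hJ).2⟩, fun J => le_sSup⟩
      obtain ⟨L, hL, h1⟩ := (Submodule.mem_sSup_of_directed ⟨J, hJ⟩ hchain.directedOn).1
        ((Ideal.eq_top_iff_one _).1 h)
      exact (hc hL).1 ((Ideal.eq_top_iff_one _).2 h1))
    I ⟨hI_top, (isStarIdeal_iff.1 hI).2⟩
  exact ⟨P, ⟨hP.prop.1, isStarIdeal_iff.2 ⟨ne_bot_of_le_ne_bot hI.1 hIP, hP.prop.2⟩,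
    fun J hJ_top hJ hPJ => (hP.eq_of_le ⟨hJ_top, (isStarIdeal_iff.1 hJ).2⟩ hPJ).symm⟩, hIP⟩

theorem closure_eq_top_iff (hs : s.FiniteCharacter) (hI : I ≠ ⊥) :
    s.closure I = ⊤ ↔ ∀ P, s.IsMaxStarIdeal P → ¬I ≤ P := by
  refine ⟨fun h P hP hIP => hP.1 (top_le_iff.1 ?_), fun h => by_contra fun hI_top => ?_⟩
  · exact h ▸ ClosureOperator.closure_min hIP hP.isClosed
  · obtain ⟨P, hP, hIP⟩ := (isStarIdeal_closure hI).exists_isMaxStarIdeal_ge hs hI_top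
    exact h P hP ((s.closure.le_closure I).trans hIP)

theorem exists_algebraMap_eq_of_forall_isMaxStarIdeal (hs : s.FiniteCharacter) (x : K)
    (hx : ∀ P, s.IsMaxStarIdeal P → ∃ a t : D, t ∉ P ∧ x * algebraMap D K t = algebraMap D K a) :
    ∃ d : D, algebraMap D K d = x := by
  have hclosure : s.closure (fractionColon ⊤ x) = ⊤ := by
    refine (closure_eq_top_iff hs (fractionColon_top_ne_bot x)).2 fun P hP hle => ?_
    obtain ⟨a, t, ht, hta⟩ := hx P hP
    exact ht (hle (mem_fractionColon.2 ⟨a, trivial, by rw [← hta, mul_comm]⟩))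
  rw [(isClosed_fractionColon s.closure.isClosed_top x).closure_eq, Ideal.eq_top_iff_one,
    mem_fractionColon] at hclosure
  simpa only [Submodule.mem_top, true_and, map_one, one_mul] using hclosure

theorem isClosed_localContraction (hs : s.FiniteCharacter) [P.IsPrime]
    (hI : s.closure.IsClosed I) : s.closure.IsClosed (localContraction P I) := by
  refine ClosureOperator.isClosed_iff_closure_le.2 fun d hd => ?_
  obtain ⟨F, hFI, hF, hdF⟩ := exists_fg_le_mem_closure hs hd
  obtain ⟨t, ht, hFt⟩ := exists_le_colon_of_fg hF hFI
  have hdt := Submodule.mem_colon_singleton.1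
    (ClosureOperator.closure_min hFt (isClosed_colon hI t) hdF)
  exact mem_localContraction.2 ⟨t, ht, by rwa [mul_comm]⟩

theorem le_closure_of_forall_le_localContraction (hs : s.FiniteCharacter) (hJ : J ≠ ⊥)
    (h : ∀ P, s.IsMaxStarIdeal P → I ≤ localContraction P J) : I ≤ s.closure J := by
  intro d hd
  have hJd : J ≤ (s.closure J).colon {d} := (s.closure.le_closure J).trans Ideal.le_colon
  have hclosure : s.closure ((s.closure J).colon {d}) = ⊤ := by
    refine (closure_eq_top_iff hs (ne_bot_of_le_ne_bot hJ hJd)).2 fun P hP hle => ?_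
    have := hP.isPrime
    obtain ⟨t, ht, htd⟩ := mem_localContraction.1 (h P hP hd)
    exact ht (hle (Submodule.mem_colon_singleton.2 (s.closure.le_closure J htd)))
  rw [(isClosed_colon (s.closure.isClosed_closure J) d).closure_eq,
    Ideal.eq_top_iff_one] at hclosure
  simpa using hclosure

end FiniteCharacter

section Homogeneous

theorem closure_sup_eq_top (hs : s.FiniteCharacter) (hP : s.IsMaxStarIdeal P)
    (hQ : s.IsMaxStarIdeal Q) (hPQ : P ≠ Q) : s.closure (P ⊔ Q) = ⊤ := by
  refine (closure_eq_top_iff hs (ne_bot_of_le_ne_bot hP.2.1.1 le_sup_left)).2 fun M hM hle => ?_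
  have hMP := hP.eq_of_le hM.isClosed hM.1 (le_sup_left.trans hle)
  have hMQ := hQ.eq_of_le hM.isClosed hM.1 (le_sup_right.trans hle)
  exact hPQ (hMP.symm.trans hMQ)

theorem IsHomog.eq_of_le (hs : s.FiniteCharacter) (hI : s.IsHomog I) (hP : s.IsMaxStarIdeal P)
    (hQ : s.IsMaxStarIdeal Q) (hIP : I ≤ P) (hIQ : I ≤ Q) : P = Q := by
  by_contra hPQ
  obtain ⟨-, -, hIft, hsup⟩ := hI
  obtain ⟨F, hFPQ, hF, hF1⟩ := exists_fg_le_mem_closure hs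
    ((Ideal.eq_top_iff_one _).1 (closure_sup_eq_top hs hP hQ hPQ))
  obtain ⟨F₁, hF₁P, F₂, hF₂Q, hF₁, hF₂, hFsup⟩ := exists_fg_le_sup hF hFPQ
  have hJft := hIft.closure_sup hF₁
  have hJ'ft := hIft.closure_sup hF₂
  have hJP := ClosureOperator.closure_min (sup_le hIP hF₁P) hP.isClosed
  have hJ'Q := ClosureOperator.closure_min (sup_le hIQ hF₂Q) hQ.isClosed
  refine hsup _ _ (ne_top_of_le_ne_top hP.1 hJP) (ne_top_of_le_ne_top hQ.1 hJ'Q) hJft.isStarIdeal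
    hJ'ft.isStarIdeal hJft hJ'ft (le_sup_left.trans (s.closure.le_closure _))
    (le_sup_left.trans (s.closure.le_closure _)) ?_
  rw [Submodule.add_eq_sup,
    star_coeIdeal_eq_one_iff (ne_bot_of_le_ne_bot hJft.isStarIdeal.1 le_sup_left),
    Ideal.eq_top_iff_one]
  refine s.closure.monotone (hFsup.trans (sup_le_sup ?_ ?_)) hF1 <;>
    exact le_sup_right.trans (s.closure.le_closure _)

theorem IsFiniteTypeStarIdeal.isHomog (hs : s.FiniteCharacter) (hI : s.IsFiniteTypeStarIdeal I)
    (hI_top : I ≠ ⊤)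
    (h : ∀ P Q, s.IsMaxStarIdeal P → s.IsMaxStarIdeal Q → I ≤ P → I ≤ Q → P = Q) :
    s.IsHomog I := by
  refine ⟨hI_top, hI.isStarIdeal, hI, fun J J' hJ_top hJ'_top hJ hJ' _ _ hIJ hIJ' hsup => ?_⟩
  obtain ⟨P, hP, hJP⟩ := hJ.exists_isMaxStarIdeal_ge hs hJ_top
  obtain ⟨Q, hQ, hJ'Q⟩ := hJ'.exists_isMaxStarIdeal_ge hs hJ'_top
  obtain rfl := h P Q hP hQ (hIJ.trans hJP) (hIJ'.trans hJ'Q)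
  have hJJ' : J + J' ≠ ⊥ := ne_bot_of_le_ne_bot hJ.1 le_sup_left
  exact (closure_eq_top_iff hs hJJ').1 ((star_coeIdeal_eq_one_iff hJJ').1 hsup) P hP
    (sup_le hJP hJ'Q)

end Homogeneous

section Invertible

theorem mem_coeIdeal_div_coeIdeal_iff (hI : I ≠ ⊥) {x : K} :
    x ∈ (J : FractionalIdeal D⁰ K) / (I : FractionalIdeal D⁰ K) ↔ I ≤ fractionColon J x := by
  rw [← spanSingleton_mul_coeIdeal_le_iff, ← FractionalIdeal.spanSingleton_le_iff_mem,
    FractionalIdeal.le_div_iff_mul_le (FractionalIdeal.coeIdeal_ne_zero.2 hI)]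

theorem starInvertible_iff (hs : s.FiniteCharacter) (hI : I ≠ ⊥) :
    s.StarInvertible I ↔ ∀ P, s.IsMaxStarIdeal P →
      ∃ x : K, I ≤ fractionColon ⊤ x ∧ ¬I ≤ fractionColon P x := by
  have hI0 : (I : FractionalIdeal D⁰ K) ≠ 0 := FractionalIdeal.coeIdeal_ne_zero.2 hI
  obtain ⟨E, hE⟩ := FractionalIdeal.le_one_iff_exists_coeIdeal.1
    (FractionalIdeal.mul_one_div_le_one (I := (I : FractionalIdeal D⁰ K)))
  rw [← FractionalIdeal.inv_eq] at hE
  have hIE : I ≤ E := by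
    rw [← FractionalIdeal.coeIdeal_le_coeIdeal K, hE]
    exact FractionalIdeal.le_self_mul_inv FractionalIdeal.coeIdeal_le_one
  have hE0 := ne_bot_of_le_ne_bot hI hIE
  rw [StarInvertible, ← hE, star_coeIdeal_eq_one_iff hE0, closure_eq_top_iff hs hE0]
  refine forall₂_congr fun P _ => ?_
  rw [← FractionalIdeal.coeIdeal_le_coeIdeal K, hE, mul_comm,
    ← FractionalIdeal.le_div_iff_mul_le hI0, SetLike.not_le_iff_exists]
  simp only [FractionalIdeal.inv_eq, ← FractionalIdeal.coeIdeal_top (P := K),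
    mem_coeIdeal_div_coeIdeal_iff hI]

theorem StarInvertible.exists_isLocalGenerator (hs : s.FiniteCharacter) {S : Set D}
    (hS : Ideal.span S ≠ ⊥) (h : s.StarInvertible (s.closure (Ideal.span S)))
    (hP : s.IsMaxStarIdeal P) : ∃ c ∈ S, IsLocalGenerator P (s.closure (Ideal.span S)) c := by
  have := hP.isPrime
  obtain ⟨x, hx, hxP⟩ := (starInvertible_iff hs (closure_ne_bot hS)).1 h P hP
  have hSx : ¬S ⊆ fractionColon P x := fun hle =>
    hxP (ClosureOperator.closure_min (Ideal.span_le.2 hle) (isClosed_fractionColon hP.isClosed x))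
  obtain ⟨c, hc, hcP⟩ := Set.not_subset.1 hSx
  have hcI : c ∈ s.closure (Ideal.span S) := s.closure.le_closure _ (Ideal.subset_span hc)
  obtain ⟨t, -, ht⟩ := mem_fractionColon.1 (hx hcI)
  have htP : t ∉ P := fun htP => hcP (mem_fractionColon.2 ⟨t, htP, ht⟩)
  refine ⟨c, hc, hcI, fun i hi => mem_localContraction_span_singleton.2 ⟨t, htP, ?_⟩⟩
  obtain ⟨a, -, ha⟩ := mem_fractionColon.1 (hx hi)
  refine ⟨a, IsFractionRing.injective D K ?_⟩
  rw [map_mul, map_mul, ht, ha]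
  ring

theorem starInvertible_closure (hs : s.FiniteCharacter) (hI : I ≠ ⊥) (hfg : I.FG)
    (h : ∀ P, s.IsMaxStarIdeal P → ∃ c, IsLocalGenerator P I c) :
    s.StarInvertible (s.closure I) := by
  refine (starInvertible_iff hs (closure_ne_bot hI)).2 fun P hP => ?_
  have := hP.isPrime
  obtain ⟨c, hc⟩ := h P hP
  obtain ⟨t, htP, ht⟩ := exists_le_colon_of_fg hfg hc.2
  have hc0 : algebraMap D K c ≠ 0 := by
    simpa only [Ne, FaithfulSMul.algebraMap_eq_zero_iff] using hc.ne_zero hI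
  refine ⟨algebraMap D K t / algebraMap D K c,
    ClosureOperator.closure_min (fun d hd => ?_) (isClosed_fractionColon s.closure.isClosed_top _),
    fun hle => ?_⟩
  · obtain ⟨a, ha⟩ := Ideal.mem_span_singleton.1 (Submodule.mem_colon_singleton.1 (ht hd))
    refine mem_fractionColon.2 ⟨a, trivial, ?_⟩
    rw [← mul_div_assoc, ← map_mul, ← smul_eq_mul, ha, map_mul, mul_div_cancel_left₀ _ hc0]
  · obtain ⟨p, hp, hpt⟩ := mem_fractionColon.1 (hle (s.closure.le_closure I hc.1))
    rw [mul_div_cancel₀ _ hc0] at hpt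
    exact htP (IsFractionRing.injective D K hpt ▸ hp)

end Invertible

section SuperSHDomain

/-- `D` is a `*`-super SH domain: every principal ideal generated by a nonzero nonunit is a
`*`-product of finitely many `*`-super homogeneous ideals. -/
def IsSuperSHDomain (s : StarOperation D K) : Prop :=
  ∀ x : D, x ≠ 0 → ¬IsUnit x →
    ∃ T : Multiset (Ideal D), (∀ J ∈ T, s.IsSuperHomog J) ∧
      s.star ((T.prod : Ideal D) : FractionalIdeal D⁰ K) =
        ((Ideal.span {x} : Ideal D) : FractionalIdeal D⁰ K)

theorem isSuperSHDomain_iff :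
    s.IsSuperSHDomain ↔ ∀ x : D, x ≠ 0 → ¬IsUnit x → ∃ T : Multiset (Ideal D),
      (∀ J ∈ T, s.IsSuperHomog J) ∧ s.closure T.prod = Ideal.span {x} := by
  refine forall₃_congr fun x _ _ => exists_congr fun T => and_congr_right fun hT =>
    star_coeIdeal_eq_coeIdeal_iff ?_
  exact Multiset.prod_ne_zero fun h0 => (hT _ h0).1.2.1.1 rfl

theorem IsSuperHomog.exists_isLocalGenerator_isLocallyComparable (hs : s.FiniteCharacter)
    (hI : s.IsSuperHomog I) (hP : s.IsMaxStarIdeal P) :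
    ∃ c, IsLocalGenerator P I c ∧ IsLocallyComparable P c := by
  have := hP.isPrime
  obtain ⟨⟨-, hIstar, hIft, -⟩, hinv⟩ := hI
  have hspan : s.closure (Ideal.span (I : Set D)) = I := by
    rw [Ideal.span_eq, (isStarIdeal_iff.1 hIstar).2.closure_eq]
  obtain ⟨c, -, hc⟩ := StarInvertible.exists_isLocalGenerator hs
    (by rw [Ideal.span_eq]; exact hIstar.1) (hspan.symm ▸ hinv I hIstar hIft le_rfl) hP
  rw [hspan] at hc
  refine ⟨c, hc, fun w => ?_⟩
  have hsup : Ideal.span (I ∪ {w} : Set D) = I ⊔ Ideal.span {w} := by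
    rw [Ideal.span_union, Ideal.span_eq]
  have hft := hIft.closure_sup (Submodule.fg_span_singleton w)
  have hle := s.closure.le_closure (I ⊔ Ideal.span {w})
  obtain ⟨d, hd, hdgen⟩ := StarInvertible.exists_isLocalGenerator hs
    (hsup ▸ ne_bot_of_le_ne_bot hIstar.1 le_sup_left)
    (hsup ▸ hinv _ hft.isStarIdeal hft (le_sup_left.trans hle)) hP
  rw [hsup] at hdgen
  obtain hdI | rfl := hd
  · have hw := hdgen.2 (hle (Ideal.mem_sup_right (Ideal.mem_span_singleton_self w)))
    exact .inl (localContraction_le_localContraction_iff.2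
      ((Ideal.span_singleton_le_iff_mem _).2 (hc.2 hdI)) hw)
  · exact .inr (hdgen.2 (hle (Ideal.mem_sup_left hc.1)))

theorem localContraction_eq_of_isLocalGenerator (hs : s.FiniteCharacter) [P.IsPrime] {c x : D}
    (hc : IsLocalGenerator P I c) (hx : s.closure I = Ideal.span {x}) :
    localContraction P (Ideal.span {c}) = localContraction P (Ideal.span {x}) := by
  refine le_antisymm (localContraction_mono ?_) (localContraction_le_localContraction_iff.2 ?_)
  · rw [Ideal.span_singleton_le_iff_mem, ← hx]
    exact s.closure.le_closure I hc.1
  · exact hx ▸ ClosureOperator.closure_min hc.2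
      (isClosed_localContraction hs (isClosed_span_singleton c))

theorem IsSuperSHDomain.valuationRing (hs : s.FiniteCharacter) (h : s.IsSuperSHDomain) [P.IsPrime]
    (hP : s.IsMaxStarIdeal P) : ValuationRing (Localization.AtPrime P) := by
  refine valuationRing_localization_iff.2 fun x => ?_
  obtain rfl | hx := eq_or_ne x 0
  · exact isLocallyComparable_zero
  by_cases hxu : IsUnit x
  · exact .of_isUnit hxu
  obtain ⟨T, hT, hTx⟩ := isSuperSHDomain_iff.1 h x hx hxu
  obtain ⟨c, hcT, hc⟩ := exists_isLocalGenerator_multiset_prod fun J hJ =>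
    (hT J hJ).exists_isLocalGenerator_isLocallyComparable hs hP
  exact hc.of_localContraction_eq (localContraction_eq_of_isLocalGenerator hs hcT hTx)

theorem exists_mem_le_of_closure_prod_eq_span [hP : P.IsPrime] {T : Multiset (Ideal D)} {x : D}
    (hT : s.closure T.prod = Ideal.span {x}) (hxP : x ∈ P) : ∃ J ∈ T, J ≤ P := by
  refine hP.multiset_prod_le.1 ((s.closure.le_closure _).trans ?_)
  rwa [hT, Ideal.span_singleton_le_iff_mem]

theorem IsSuperSHDomain.finiteStarCharacter (hs : s.FiniteCharacter) (h : s.IsSuperSHDomain) :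
    s.FiniteStarCharacter := by
  intro x hx hxu
  obtain ⟨T, hT, hTx⟩ := isSuperSHDomain_iff.1 h x hx hxu
  refine (T.finite_toSet.biUnion fun J hJ =>
    Set.Subsingleton.finite (s := {P | s.IsMaxStarIdeal P ∧ J ≤ P}) ?_).subset ?_
  · exact fun P hP Q hQ => (hT J hJ).1.eq_of_le hs hP.1 hQ.1 hP.2 hQ.2
  · rintro P ⟨hP, hxP⟩
    have := hP.isPrime
    obtain ⟨J, hJ, hJP⟩ := exists_mem_le_of_closure_prod_eq_span hTx hxP
    exact Set.mem_biUnion hJ ⟨hP, hJP⟩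

theorem IsSuperSHDomain.eq_of_isPrime_le_inf (hs : s.FiniteCharacter) (h : s.IsSuperSHDomain)
    (hP : s.IsMaxStarIdeal P) (hQ : s.IsMaxStarIdeal Q) {L : Ideal D} [hL : L.IsPrime]
    (hL0 : L ≠ ⊥) (hLPQ : L ≤ P ⊓ Q) : P = Q := by
  obtain ⟨x, hxL, hx⟩ := Submodule.exists_mem_ne_zero_of_ne_bot hL0
  obtain ⟨T, hT, hTx⟩ := isSuperSHDomain_iff.1 h x hx
    fun hxu => hL.ne_top (Ideal.eq_top_of_isUnit_mem L hxL hxu)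
  obtain ⟨J, hJ, hJL⟩ := exists_mem_le_of_closure_prod_eq_span hTx hxL
  exact (hT J hJ).1.eq_of_le hs hP hQ (hJL.trans (hLPQ.trans inf_le_left))
    (hJL.trans (hLPQ.trans inf_le_right))

theorem IsSuperSHDomain.isIRKT (hs : s.FiniteCharacter) (h : s.IsSuperSHDomain) : s.IsIRKT :=
  ⟨fun _ _ hP => h.valuationRing hs hP, exists_algebraMap_eq_of_forall_isMaxStarIdeal hs,
    h.finiteStarCharacter hs, fun _ _ hP hQ hPQ _ _ hL0 hL =>
      hPQ (h.eq_of_isPrime_le_inf hs hP hQ hL0 hL)⟩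

end SuperSHDomain

section IRKT

theorem IsIRKT.not_localContraction_le (h : s.IsIRKT) (hI : I ≠ ⊥) (hP : s.IsMaxStarIdeal P)
    (hQ : s.IsMaxStarIdeal Q) (hPQ : P ≠ Q) : ¬localContraction P I ≤ Q := by
  intro hle
  have := hP.isPrime
  have := hQ.isPrime
  obtain ⟨L, hL, hIL, hLPQ⟩ := exists_isPrime_le_inf_of_localContraction_le hle
  exact h.2.2.2 P Q hP hQ hPQ L hL (ne_bot_of_le_ne_bot hI hIL) hLPQ

theorem IsIRKT.isFiniteTypeStarIdeal_localContraction (hs : s.FiniteCharacter) (h : s.IsIRKT)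
    (hP : s.IsMaxStarIdeal P) {x : D} (hx : x ≠ 0) (hxP : x ∈ P) :
    s.IsFiniteTypeStarIdeal (localContraction P (Ideal.span {x})) := by
  have := hP.isPrime
  have hspan : Ideal.span {x} ≠ ⊥ := by simpa using hx
  have hfin := h.2.2.1 x hx fun hxu => hP.1 (Ideal.eq_top_of_isUnit_mem P hxP hxu)
  obtain ⟨y, hyA, hy⟩ : ∃ y ∈ localContraction P (Ideal.span {x}),
      ∀ Q, s.IsMaxStarIdeal Q → x ∈ Q → Q ≠ P → y ∉ Q := by
    have havoid := (Ideal.subset_union_prime_finite (hfin.sdiff (t := {P})) (f := id) ⊥ ⊥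
      (I := localContraction P (Ideal.span {x})) fun Q hQ _ _ => hQ.1.1.isPrime).not.2
        fun ⟨Q, hQ, hle⟩ => h.not_localContraction_le hspan hP hQ.1.1 (Ne.symm hQ.2) hle
    obtain ⟨y, hyA, hy⟩ := Set.not_subset.1 havoid
    exact ⟨y, hyA, fun Q hQ hxQ hQP hyQ => hy (Set.mem_biUnion ⟨⟨hQ, hxQ⟩, hQP⟩ hyQ)⟩
  have hxF : Ideal.span {x} ≤ Ideal.span {x, y} := Ideal.span_mono (by simp)
  have hF : Ideal.span {x, y} ≠ ⊥ := ne_bot_of_le_ne_bot hspan hxF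
  refine isFiniteTypeStarIdeal_iff.2 ⟨Ideal.span {x, y}, hF,
    Submodule.fg_span (Set.toFinite _), le_antisymm ?_ ?_⟩
  · refine ClosureOperator.closure_min (Ideal.span_le.2 (Set.pair_subset ?_ hyA))
      (isClosed_localContraction hs (isClosed_span_singleton x))
    exact le_localContraction (Ideal.mem_span_singleton_self x)
  · refine le_closure_of_forall_le_localContraction hs hF fun Q hQ => ?_
    have := hQ.isPrime
    obtain rfl | hQP := eq_or_ne Q P
    · exact localContraction_mono hxF
    · have hFQ : ¬Ideal.span {x, y} ≤ Q := fun hle =>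
        hy Q hQ (hle (Ideal.subset_span (by simp))) hQP (hle (Ideal.subset_span (by simp)))
      exact localContraction_eq_top_of_not_le hFQ ▸ le_top

theorem IsIRKT.starInvertible (hs : s.FiniteCharacter) (h : s.IsIRKT)
    (hI : s.IsFiniteTypeStarIdeal I) : s.StarInvertible I := by
  obtain ⟨F, hF, hFfg, rfl⟩ := isFiniteTypeStarIdeal_iff.1 hI
  refine starInvertible_closure hs hF hFfg fun P hP => ?_
  have := hP.isPrime
  exact exists_isLocalGenerator_of_fg (valuationRing_localization_iff.1 (h.1 P hP)) hFfg

theorem IsIRKT.isSuperHomog_localContraction (hs : s.FiniteCharacter) (h : s.IsIRKT)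
    (hP : s.IsMaxStarIdeal P) {x : D} (hx : x ≠ 0) (hxP : x ∈ P) :
    s.IsSuperHomog (localContraction P (Ideal.span {x})) := by
  have := hP.isPrime
  have hle : localContraction P (Ideal.span {x}) ≤ P :=
    localContraction_le_of_le ((Ideal.span_singleton_le_iff_mem P).2 hxP)
  have eq_of_le {Q : Ideal D} (hQ : s.IsMaxStarIdeal Q)
      (hleQ : localContraction P (Ideal.span {x}) ≤ Q) : P = Q :=
    by_contra fun hPQ => h.not_localContraction_le (by simpa using hx) hP hQ hPQ hleQ
  refine ⟨(h.isFiniteTypeStarIdeal_localContraction hs hP hx hxP).isHomog hs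
    (ne_top_of_le_ne_top hP.1 hle) fun Q Q' hQ hQ' hleQ hleQ' =>
      (eq_of_le hQ hleQ).symm.trans (eq_of_le hQ' hleQ'), fun J _ hJ _ => h.starInvertible hs hJ⟩

theorem IsIRKT.closure_prod_localContraction (hs : s.FiniteCharacter) (h : s.IsIRKT) {x : D}
    (hx : x ≠ 0) {S : Finset (Ideal D)} (hS : ∀ P, P ∈ S ↔ s.IsMaxStarIdeal P ∧ x ∈ P) :
    s.closure (∏ P ∈ S, localContraction P (Ideal.span {x})) = Ideal.span {x} := by
  have hspan : Ideal.span {x} ≠ ⊥ := by simpa using hx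
  have hne : ∏ P ∈ S, localContraction P (Ideal.span {x}) ≠ ⊥ :=
    Finset.prod_ne_zero_iff.2 fun P hP =>
      (h.isSuperHomog_localContraction hs ((hS P).1 hP).1 hx ((hS P).1 hP).2).1.2.1.1
  refine le_antisymm (ClosureOperator.closure_min ?_ (isClosed_span_singleton x)) ?_
  · refine (le_closure_of_forall_le_localContraction hs hspan fun Q hQ => ?_).trans_eq
      (isClosed_span_singleton x).closure_eq
    have := hQ.isPrime
    by_cases hxQ : x ∈ Q
    · exact Ideal.prod_le_inf.trans (Finset.inf_le ((hS Q).2 ⟨hQ, hxQ⟩))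
    · rw [localContraction_eq_top_of_not_le (mt (Ideal.span_singleton_le_iff_mem Q).1 hxQ)]
      exact le_top
  · refine le_closure_of_forall_le_localContraction hs hne fun Q hQ => ?_
    have := hQ.isPrime
    have hprod : ∏ P ∈ S, localContraction Q (localContraction P (Ideal.span {x})) =
        localContraction Q (localContraction Q (Ideal.span {x})) := by
      refine Finset.prod_eq_single Q (fun P hP hPQ => ?_) fun hQS => ?_ <;>
        rw [Ideal.one_eq_top]
      · exact localContraction_eq_top_of_not_le
          (h.not_localContraction_le hspan ((hS P).1 hP).1 hQ hPQ)
      · refine localContraction_eq_top_of_not_le fun hle => hQS ((hS Q).2 ⟨hQ, hle ?_⟩)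
        exact le_localContraction (Ideal.mem_span_singleton_self x)
    calc Ideal.span {x}
        ≤ localContraction Q (localContraction Q (Ideal.span {x})) :=
          le_localContraction.trans le_localContraction
      _ = ∏ P ∈ S, localContraction Q (localContraction P (Ideal.span {x})) := hprod.symm
      _ ≤ localContraction Q (∏ P ∈ S, localContraction P (Ideal.span {x})) :=
          prod_localContraction_le S _

theorem IsIRKT.isSuperSHDomain (hs : s.FiniteCharacter) (h : s.IsIRKT) : s.IsSuperSHDomain := by
  refine isSuperSHDomain_iff.2 fun x hx hxu => ?_
  have hfin := h.2.2.1 x hx hxu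
  refine ⟨hfin.toFinset.val.map fun P => localContraction P (Ideal.span {x}), fun J hJ => ?_,
    h.closure_prod_localContraction hs hx fun P => hfin.mem_toFinset⟩
  obtain ⟨P, hP, rfl⟩ := Multiset.mem_map.1 hJ
  obtain ⟨hP, hxP⟩ := hfin.mem_toFinset.1 hP
  exact h.isSuperHomog_localContraction hs hP hx hxP

end IRKT

end StarOperation

/-- `D` is a `*`-super SH domain iff `D` is a `*`-independent ring of
Krull type. -/
theorem superSH_iff_IRKT {D K : Type*} [CommRing D] [IsDomain D] [Field K]
    [Algebra D K] [IsFractionRing D K] (s : StarOperation D K) (hs : s.FiniteCharacter) :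
    (∀ x : D, x ≠ 0 → ¬IsUnit x →
      ∃ T : Multiset (Ideal D), (∀ J ∈ T, s.IsSuperHomog J) ∧
        s.star ((T.prod : Ideal D) : FractionalIdeal D⁰ K) =
          ((Ideal.span {x} : Ideal D) : FractionalIdeal D⁰ K)) ↔
    s.IsIRKT :=
  ⟨StarOperation.IsSuperSHDomain.isIRKT hs, StarOperation.IsIRKT.isSuperSHDomain hs⟩
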